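/- Let A_+ ∈ ℝ^{n×n} be symmetric positive definite, let Λ_- ∈ ℝ^{n_-×n_-} be diagonal positive definite, let V_- ∈ ℝ^{n×n_-} have orthonormal columns, and suppose A := A_+ − V_- Λ_- (V_-)^T is symmetric positive definite. Let W ∈ ℝ^{n×n_-} satisfy range(W) = range(A_+^{-1} V_-), and let H_2 ∈ ℝ^{n×n} be symmetric positive definite such that every eigenvalue of H_2 A_+ lies in [λ_min, λ_max] with 0 < λ_min ≤ λ_max. Define the additive AWG preconditioner H_{3,ad} := H_2 + W (W^T A W)^{-1} W^T. Then every eigenvalue λ of H_{3,ad} A satisfies min(1, λ_min) ≤ λ ≤ λ_max + 1. -/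

import Mathlib

open Matrix

/-!
For positive definite `P`, the eigenvalues of `K * P` lie in `[a, b]` exactly when
`a • P⁻¹ ≤ K ≤ b • P⁻¹` in the Loewner order, so the theorem is a comparison of `H₂ + Q` with
`A⁻¹`, where `Q = W (Wᴴ A W)⁻¹ Wᴴ`. From above, `H₂ ≤ λmax A₊⁻¹ ≤ λmax A⁻¹` because `A ≤ A₊`, and
`Q ≤ A⁻¹` because `A⁻¹ - Q` is a Schur complement in `[Wᴴ A W, Wᴴ; W, A⁻¹]`, whose other Schur
complement is zero. From below, `Q A` is a projection onto the range of `W`, which contains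
the range of `A⁻¹ - A₊⁻¹`; this forces `A⁻¹ - A₊⁻¹ ≤ Q`, and hence
`H₂ + Q ≥ λmin A₊⁻¹ + Q ≥ min(1, λmin) A⁻¹`.
-/

theorem injective_of_range_eq_range {K E F : Type*} [DivisionRing K] [AddCommGroup E]
    [Module K E] [FiniteDimensional K E] [AddCommGroup F] [Module K F] {f g : E →ₗ[K] F}
    (hfg : LinearMap.range f = LinearMap.range g) (hg : Function.Injective g) :
    Function.Injective f := by
  have hdim := f.finrank_range_add_finrank_ker
  rw [hfg, LinearMap.finrank_range_of_inj hg] at hdim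
  exact LinearMap.ker_eq_bot.mp (Submodule.finrank_eq_zero.mp (by lia))

theorem mulVec_injective_of_mul_eq_one {R ι κ : Type*} [Semiring R] [Fintype ι] [Fintype κ]
    [DecidableEq κ] {M : Matrix ι κ R} {N : Matrix κ ι R} (h : N * M = 1) :
    Function.Injective M.mulVec :=
  Function.LeftInverse.injective (g := N.mulVec) fun x => by rw [mulVec_mulVec, h, one_mulVec]

theorem range_mulVecLin_mul_le {R ι κ μ : Type*} [CommSemiring R] [Fintype κ] [Fintype μ]
    (M : Matrix ι κ R) (N : Matrix κ μ R) :
    LinearMap.range (M * N).mulVecLin ≤ LinearMap.range M.mulVecLin := by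
  rw [mulVecLin_mul]
  exact LinearMap.range_comp_le_range _ _

theorem range_inv_sub_inv_le {R ι κ : Type*} [CommRing R] [Fintype ι] [DecidableEq ι] [Fintype κ]
    {A B : Matrix ι ι R} {V : Matrix ι κ R} {N : Matrix κ ι R} (hA : IsUnit A) (hB : IsUnit B)
    (hAB : A = B - V * N) :
    LinearMap.range (A⁻¹ - B⁻¹).mulVecLin ≤ LinearMap.range (B⁻¹ * V).mulVecLin := by
  have hfactor : A⁻¹ - B⁻¹ = B⁻¹ * V * (N * A⁻¹) := by
    have hdiff : A - B = -(V * N) := by rw [hAB, sub_sub_cancel_left]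
    rw [← neg_sub B⁻¹, Matrix.inv_sub_inv (iff_of_true hB hA), hdiff]
    simp only [Matrix.mul_neg, Matrix.neg_mul, neg_neg, Matrix.mul_assoc]
  rw [hfactor]
  exact range_mulVecLin_mul_le _ _

theorem spectrum_subset_iff_forall_mulVec_eq_smul {ι K : Type*} [Fintype ι] [DecidableEq ι]
    [Field K] {M : Matrix ι ι K} {s : Set K} :
    spectrum K M ⊆ s ↔ ∀ (μ : K) (x : ι → K), x ≠ 0 → M *ᵥ x = μ • x → μ ∈ s := by
  have hmem (μ : K) : μ ∈ spectrum K M ↔ ∃ x, x ≠ 0 ∧ M *ᵥ x = μ • x := by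
    rw [← spectrum_toLin', ← Module.End.hasEigenvalue_iff_mem_spectrum,
      Module.End.HasEigenvalue, Module.End.HasUnifEigenvalue, Submodule.ne_bot_iff]
    simp [and_comm]
  simp only [Set.subset_def, hmem, forall_exists_index, and_imp]

theorem star_right_conjugate_le_conjugate_iff {R : Type*} [Ring R] [PartialOrder R] [StarRing R]
    [StarOrderedRing R] {u x y : R} (hu : IsUnit u) :
    u * x * star u ≤ u * y * star u ↔ x ≤ y := by
  rw [← sub_nonneg, ← sub_mul, ← mul_sub, hu.star_right_conjugate_nonneg_iff, sub_nonneg]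

section CoarseCorrection

variable {R ι κ : Type*} [CommRing R] [StarRing R] [Fintype ι] [Fintype κ] [DecidableEq κ]
  {A : Matrix ι ι R} {W : Matrix ι κ R}

/-- The coarse-space correction `W (Wᴴ A W)⁻¹ Wᴴ`, which inverts `A` on the range of `W` and is
added to a one-level preconditioner. It is meaningful only if `Wᴴ A W` is invertible. -/
noncomputable def coarseCorrection (A : Matrix ι ι R) (W : Matrix ι κ R) : Matrix ι ι R :=
  W * (Wᴴ * A * W)⁻¹ * Wᴴ

theorem isHermitian_coarseCorrection (hA : A.IsHermitian) :
    (coarseCorrection A W).IsHermitian :=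
  isHermitian_mul_mul_conjTranspose W (isHermitian_conjTranspose_mul_mul W hA).inv

theorem coarseCorrection_mul_mul_of_range_le {μ : Type*} [Fintype μ] {T : Matrix ι μ R}
    (hWAW : IsUnit (Wᴴ * A * W))
    (hT : LinearMap.range T.mulVecLin ≤ LinearMap.range W.mulVecLin) :
    coarseCorrection A W * A * T = T := by
  have hfix : coarseCorrection A W * A * W = W := by
    simp only [coarseCorrection, Matrix.mul_assoc] at hWAW ⊢
    rw [nonsing_inv_mul _ ((isUnit_iff_isUnit_det _).mp hWAW), Matrix.mul_one]
  classical
  refine ext_of_mulVec_single fun i => ?_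
  obtain ⟨y, hy⟩ : ∃ y, W *ᵥ y = T *ᵥ Pi.single i 1 := hT ⟨_, rfl⟩
  rw [← mulVec_mulVec, ← hy, mulVec_mulVec, hfix]

end CoarseCorrection

section Loewner

open scoped ComplexOrder MatrixOrder

theorem le_of_eq_sub_mul_mul_conjTranspose {𝕜 ι κ : Type*} [RCLike 𝕜] [Finite ι] [Fintype κ]
    {A B : Matrix ι ι 𝕜} {V : Matrix ι κ 𝕜} {D : Matrix κ κ 𝕜} (hD : D.PosSemidef)
    (hA : A = B - V * D * Vᴴ) : A ≤ B :=
  hA.trans_le (sub_le_self B (hD.mul_mul_conjTranspose_same V).nonneg)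

variable {𝕜 ι κ : Type*} [RCLike 𝕜] [Fintype ι] [Fintype κ] [DecidableEq κ]
  {A B H K P T : Matrix ι ι 𝕜} {V W : Matrix ι κ 𝕜} {D : Matrix κ κ 𝕜} {a b : ℝ}

theorem coarseCorrection_nonneg (hA : A.PosSemidef) : 0 ≤ coarseCorrection A W :=
  ((hA.conjTranspose_mul_mul_same W).inv.mul_mul_conjTranspose_same W).nonneg

variable [DecidableEq ι]

theorem conjTranspose_mul_inv_mul_le_iff (hA : A.PosDef) (hD : D.PosDef) :
    Vᴴ * A⁻¹ * V ≤ D ↔ V * D⁻¹ * Vᴴ ≤ A := by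
  have := hA.isUnit.invertible
  have := hD.isUnit.invertible
  exact (PosDef.fromBlocks₁₁ V D hA).symm.trans (PosDef.fromBlocks₂₂ A V hD)

theorem inv_le_inv_of_posDef (hA : A.PosDef) (hAB : A ≤ B) : B⁻¹ ≤ A⁻¹ := by
  have hB : B.PosDef := add_sub_cancel A B ▸ hA.add_posSemidef hAB
  have := hA.isUnit.invertible
  simpa using (conjTranspose_mul_inv_mul_le_iff (V := 1) hB hA.inv).mpr (by simpa using hAB)

theorem coarseCorrection_le_inv (hA : A.PosDef) (hW : Function.Injective W.mulVec) :
    coarseCorrection A W ≤ A⁻¹ := by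
  have hWAW : (Wᴴ * A * W).PosDef := hA.conjTranspose_mul_mul_same hW
  have := hA.isUnit.invertible
  exact (conjTranspose_mul_inv_mul_le_iff hA.inv hWAW).mp (by rw [inv_inv_of_invertible])

theorem le_coarseCorrection_of_range_le (hA : A.PosDef) (hW : Function.Injective W.mulVec)
    (hTA : T ≤ A⁻¹) (hT : LinearMap.range T.mulVecLin ≤ LinearMap.range W.mulVecLin) :
    T ≤ coarseCorrection A W := by
  set Q := coarseCorrection A W with hQdef
  have hWAW : (Wᴴ * A * W).PosDef := hA.conjTranspose_mul_mul_same hW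
  have hAH : Aᴴ = A := hA.isHermitian
  have hQH : Qᴴ = Q := isHermitian_coarseCorrection hA.isHermitian
  have hTH : Tᴴ = T := by
    simpa using (hA.isHermitian.inv.sub (PosSemidef.isHermitian hTA)).eq
  have hQT : Q * A * T = T := coarseCorrection_mul_mul_of_range_le hWAW.isUnit hT
  have hTQ : T * A * Q = T := by
    simpa [Matrix.mul_assoc, hTH, hAH, hQH] using congrArg (·ᴴ) hQT
  have hQQ : Q * A * Q = Q := coarseCorrection_mul_mul_of_range_le hWAW.isUnit <| by
    rw [hQdef, coarseCorrection, Matrix.mul_assoc]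
    exact range_mulVecLin_mul_le _ _
  have hfactor : Q - T = Q * A * (A⁻¹ - T) * (Q * A)ᴴ := by
    rw [conjTranspose_mul, hQH, hAH, Matrix.mul_sub, hQT,
      mul_nonsing_inv_cancel_right _ _ ((isUnit_iff_isUnit_det _).mp hA.isUnit),
      Matrix.sub_mul, ← Matrix.mul_assoc, ← Matrix.mul_assoc, hQQ, hTQ]
  rw [le_iff, hfactor]
  exact PosSemidef.mul_mul_conjTranspose_same hTA _

theorem spectrum_mul_subset_Icc_iff (hP : P.PosDef) (hK : K.IsHermitian) :
    spectrum ℝ (K * P) ⊆ Set.Icc a b ↔ a • P⁻¹ ≤ K ∧ K ≤ b • P⁻¹ := by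
  obtain ⟨C, hC, hPC⟩ :=
    CStarAlgebra.isStrictlyPositive_iff_eq_star_mul_self.mp hP.isStrictlyPositive
  have hdet := (isUnit_iff_isUnit_det C).mp hC
  have hsim : spectrum ℝ (K * P) = spectrum ℝ (C * K * star C) := by
    rw [← spectrum.units_conjugate (u := hC.unit), hPC, coe_units_inv, hC.unit_spec]
    congr 1
    simp only [← Matrix.mul_assoc]
    exact mul_nonsing_inv_cancel_right _ _ hdet
  have hconj (t : ℝ) : algebraMap ℝ _ t = C * (t • P⁻¹) * star C := by
    have hone : C * P⁻¹ * star C = 1 := by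
      rw [hPC, Matrix.mul_inv_rev, mul_nonsing_inv_cancel_left _ _ hdet,
        nonsing_inv_mul _ ((isUnit_iff_isUnit_det _).mp hC.star)]
    rw [Matrix.mul_smul, Matrix.smul_mul, hone, Algebra.algebraMap_eq_smul_one]
  have hlower : a • P⁻¹ ≤ K ↔ algebraMap ℝ _ a ≤ C * K * star C := by
    rw [hconj, star_right_conjugate_le_conjugate_iff hC]
  have hupper : K ≤ b • P⁻¹ ↔ C * K * star C ≤ algebraMap ℝ _ b := by
    rw [hconj, star_right_conjugate_le_conjugate_iff hC]
  have hCK : IsSelfAdjoint (C * K * star C) := IsSelfAdjoint.conjugate hK C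
  rw [hsim, hlower, hupper, algebraMap_le_iff_le_spectrum hCK, le_algebraMap_iff_spectrum_le hCK,
    ← forall₂_and]
  rfl

theorem stmt14_general (hA : A.PosDef) (hAB : A ≤ B) (hW : Function.Injective W.mulVec)
    (hrange : LinearMap.range (A⁻¹ - B⁻¹).mulVecLin ≤ LinearMap.range W.mulVecLin)
    (hH : H.IsHermitian) (ha : 0 ≤ a) (hab : a ≤ b)
    (hspec : spectrum ℝ (H * B) ⊆ Set.Icc a b) :
    spectrum ℝ ((H + coarseCorrection A W) * A) ⊆ Set.Icc (min 1 a) (b + 1) := by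
  set Q := coarseCorrection A W
  have hB : B.PosDef := add_sub_cancel A B ▸ hA.add_posSemidef hAB
  have hQ : 0 ≤ Q := coarseCorrection_nonneg hA.posSemidef
  have hQlower : A⁻¹ - B⁻¹ ≤ Q :=
    le_coarseCorrection_of_range_le hA hW (sub_le_self _ hB.inv.posSemidef.nonneg) hrange
  obtain ⟨hHlower, hHupper⟩ := (spectrum_mul_subset_Icc_iff hB hH).mp hspec
  refine (spectrum_mul_subset_Icc_iff hA
    (hH.add (isHermitian_coarseCorrection hA.isHermitian))).mpr ⟨?_, ?_⟩
  · calc min 1 a • A⁻¹ ≤ min 1 a • (B⁻¹ + Q) :=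
          smul_le_smul_of_nonneg_left (sub_le_iff_le_add'.mp hQlower) (le_min zero_le_one ha)
      _ = min 1 a • B⁻¹ + min 1 a • Q := smul_add _ _ _
      _ ≤ a • B⁻¹ + (1 : ℝ) • Q :=
          add_le_add
            (smul_le_smul_of_nonneg_right (min_le_right 1 a) hB.inv.posSemidef.nonneg)
            (smul_le_smul_of_nonneg_right (min_le_left 1 a) hQ)
      _ = a • B⁻¹ + Q := by rw [one_smul]
      _ ≤ H + Q := add_le_add_left hHlower Q
  · calc H + Q ≤ b • B⁻¹ + Q := add_le_add_left hHupper Q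
      _ ≤ b • A⁻¹ + A⁻¹ :=
          add_le_add
            (smul_le_smul_of_nonneg_left (inv_le_inv_of_posDef hA hAB) (ha.trans hab))
            (coarseCorrection_le_inv hA hW)
      _ = (b + 1) • A⁻¹ := by rw [add_smul, one_smul]

end Loewner

theorem stmt14 {n nm : ℕ} (hn : 0 < n) (hnm : 0 < nm) (hle : nm ≤ n)
    (Aplus : Matrix (Fin n) (Fin n) ℝ) (hAplus : Aplus.PosDef)
    (d : Fin nm → ℝ) (hd : ∀ k, 0 < d k)
    (V : Matrix (Fin n) (Fin nm) ℝ) (hVortho : Vᵀ * V = 1)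
    (A : Matrix (Fin n) (Fin n) ℝ)
    (hA : A = Aplus - V * Matrix.diagonal d * Vᵀ)
    (hApos : A.PosDef)
    (W : Matrix (Fin n) (Fin nm) ℝ)
    (hW : LinearMap.range W.mulVecLin = LinearMap.range (Aplus⁻¹ * V).mulVecLin)
    (H2 : Matrix (Fin n) (Fin n) ℝ) (hH2 : H2.PosDef)
    (lmin lmax : ℝ) (hlmin : 0 < lmin) (hlml : lmin ≤ lmax)
    (hspec : ∀ (lam : ℝ) (x : Fin n → ℝ), x ≠ 0 →
      (H2 * Aplus) *ᵥ x = lam • x → lmin ≤ lam ∧ lam ≤ lmax)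
    (H3ad : Matrix (Fin n) (Fin n) ℝ)
    (hH3ad : H3ad = H2 + W * (Wᵀ * A * W)⁻¹ * Wᵀ) :
    ∀ (lam : ℝ) (x : Fin n → ℝ), x ≠ 0 → (H3ad * A) *ᵥ x = lam • x →
      min 1 lmin ≤ lam ∧ lam ≤ lmax + 1 := by
  have hAVinj : Function.Injective (Aplus⁻¹ * V).mulVecLin := by
    rw [mulVecLin_mul]
    exact (mulVec_injective_of_isUnit hAplus.inv.isUnit).comp
      (mulVec_injective_of_mul_eq_one hVortho)
  have hrange : LinearMap.range (A⁻¹ - Aplus⁻¹).mulVecLin ≤ LinearMap.range W.mulVecLin :=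
    hW ▸ range_inv_sub_inv_le hApos.isUnit hAplus.isUnit (hA.trans (by rw [Matrix.mul_assoc]))
  subst hH3ad
  exact spectrum_subset_iff_forall_mulVec_eq_smul.mp <|
    stmt14_general hApos
      (le_of_eq_sub_mul_mul_conjTranspose (.diagonal fun k => (hd k).le) hA)
      (injective_of_range_eq_range hW hAVinj) hrange hH2.isHermitian hlmin.le hlml
      (spectrum_subset_iff_forall_mulVec_eq_smul.mpr hspec)
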